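/- Let N ∈ {3,4,5} and ℓ ∈ (−1,1). Then E(W_ℓ(0,·), ∂_t W_ℓ(0,·)) = (1/√(1−ℓ²))·E(W,0). -/

import Mathlib

/-!
The wave `W_ℓ` is the Lorentz boost of the static wave `W`: up to a translation, `W_ℓ(t, ·)` is `W`
composed with the dilation of ratio `γ = 1 / √(1 - ℓ²)` along the first axis. For any static wave
`f` with `∇f ∈ L²`, the change of variables and `γ² ℓ² = γ² - 1` give
`E(f_ℓ, ∂ₜf_ℓ) = γ⁻¹ (E(f, 0) + (γ² - 1) ∫ (∂₁f)²)`.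
If `f` is radial then `∫ (∂₁f)² = N⁻¹ ∫ |∇f|²`, and the Pohozaev identity
`∫ |∇W|² = ∫ |W|^(2N/(N-2))` makes this equal to `E(W, 0)` for `f = W`, so that the energy becomes
`γ⁻¹ (1 + (γ² - 1)) E(W, 0) = γ E(W, 0)`.
-/

open MeasureTheory Metric Filter Set

noncomputable section

/-- The ground state `W(x) = (1 + |x|²/(N(N-2)))^(-(N-2)/2)`. -/
def W (N : ℕ) (x : EuclideanSpace ℝ (Fin N)) : ℝ :=
  (1 + ‖x‖ ^ 2 / ((N : ℝ) * ((N : ℝ) - 2))) ^ (-(((N : ℝ) - 2) / 2))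

/-- The energy `E(v₀,v₁)`. -/
def energy (N : ℕ) (v₀ v₁ : EuclideanSpace ℝ (Fin N) → ℝ) : ℝ :=
  (1 / 2) * (∫ x, v₁ x ^ 2)
    + (1 / 2) * (∫ x, ‖gradient v₀ x‖ ^ 2)
    - ((N : ℝ) - 2) / (2 * (N : ℝ)) * (∫ x, |v₀ x| ^ (2 * (N : ℝ) / ((N : ℝ) - 2)))

/-- The first coordinate of a point of `ℝ^N`. -/
def firstCoord {N : ℕ} (x : EuclideanSpace ℝ (Fin N)) : ℝ :=
  if h : 0 < N then x ⟨0, h⟩ else 0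

/-- The Lorentz-transformed ground state `W_ℓ(t,x)`; the sum `x₂² + ⋯ + x_N²` is written
as `‖x‖² - x₁²`. -/
def Wl (N : ℕ) (ℓ : ℝ) (t : ℝ) (x : EuclideanSpace ℝ (Fin N)) : ℝ :=
  (1 + (firstCoord x - t * ℓ) ^ 2 / ((N : ℝ) * ((N : ℝ) - 2) * (1 - ℓ ^ 2))
     + (‖x‖ ^ 2 - firstCoord x ^ 2) / ((N : ℝ) * ((N : ℝ) - 2))) ^ (-(((N : ℝ) - 2) / 2))

/-- The time derivative `∂ₜ W_ℓ(t,x)`. -/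
def dtWl (N : ℕ) (ℓ : ℝ) (t : ℝ) (x : EuclideanSpace ℝ (Fin N)) : ℝ :=
  deriv (fun s => Wl N ℓ s x) t

/-- The second partial derivative `∂²f/∂xⱼ²` at `x`. -/
def d2 {N : ℕ} (f : EuclideanSpace ℝ (Fin N) → ℝ) (j : Fin N)
    (x : EuclideanSpace ℝ (Fin N)) : ℝ :=
  fderiv ℝ (fun y => fderiv ℝ f y (EuclideanSpace.single j 1)) x (EuclideanSpace.single j 1)

open Module
open scoped Gradient Topology RealInnerProductSpace

section ChangeOfVariables

variable {E F : Type*} [NormedAddCommGroup E] [NormedSpace ℝ E] [FiniteDimensional ℝ E]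
  [MeasurableSpace E] [BorelSpace E] [NormedAddCommGroup F] [NormedSpace ℝ F]

lemma integral_comp_linearMap_of_det_ne_zero (μ : Measure E) [μ.IsAddHaarMeasure]
    {L : E →ₗ[ℝ] E} (hL : LinearMap.det L ≠ 0) (g : E → F) :
    ∫ x, g (L x) ∂μ = |LinearMap.det L|⁻¹ • ∫ x, g x ∂μ := by
  have hemb : MeasurableEmbedding L :=
    (LinearEquiv.ofIsUnitDet (v := finBasis ℝ E) (v' := finBasis ℝ E) (f := L)
      (by rwa [LinearMap.det_toMatrix, isUnit_iff_ne_zero])).toContinuousLinearEquiv.toHomeomorph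
        |>.measurableEmbedding
  rw [← hemb.integral_map, Measure.map_linearMap_addHaar_eq_smul_addHaar μ hL,
    integral_smul_measure, ENNReal.toReal_ofReal (abs_nonneg _), abs_inv]

end ChangeOfVariables

section Stretch

variable {E : Type*} [NormedAddCommGroup E] [InnerProductSpace ℝ E]

/-- The dilation of ratio `γ` along the unit vector `e`, fixing the orthogonal complement of `e`.
It is the spatial part of a Lorentz boost. -/
def stretch (e : E) (γ : ℝ) : E →L[ℝ] E :=
  ContinuousLinearMap.id ℝ E + (innerSL ℝ e).smulRight ((γ - 1) • e)

lemma stretch_apply (e : E) (γ : ℝ) (x : E) :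
    stretch e γ x = x + ((γ - 1) * ⟪e, x⟫) • e := by
  simp [stretch, smul_smul, mul_comm]

lemma inner_stretch_left (e : E) (γ : ℝ) (x y : E) :
    ⟪stretch e γ x, y⟫ = ⟪x, stretch e γ y⟫ := by
  simp only [stretch_apply, inner_add_left, inner_add_right, real_inner_smul_left,
    real_inner_smul_right, real_inner_comm e x]
  ring

variable {e : E}

lemma stretch_self (he : ‖e‖ = 1) (γ : ℝ) : stretch e γ e = γ • e := by
  rw [stretch_apply, real_inner_self_eq_norm_sq, he]
  module

lemma norm_stretch_sq (he : ‖e‖ = 1) (γ : ℝ) (x : E) :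
    ‖stretch e γ x‖ ^ 2 = ‖x‖ ^ 2 + (γ ^ 2 - 1) * ⟪e, x⟫ ^ 2 := by
  rw [stretch_apply, norm_add_sq_real, real_inner_smul_right, norm_smul, he, real_inner_comm e x,
    Real.norm_eq_abs, mul_one, sq_abs]
  ring

variable [FiniteDimensional ℝ E]

lemma det_stretch (he : ‖e‖ = 1) (γ : ℝ) :
    LinearMap.det (stretch e γ : E →ₗ[ℝ] E) = γ := by
  have h : (stretch e γ : E →ₗ[ℝ] E) = LinearMap.transvection (innerₛₗ ℝ e) ((γ - 1) • e) := by
    ext x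
    simp [stretch, LinearMap.transvection.apply]
  rw [h, LinearMap.transvection.det, innerₛₗ_apply_apply, real_inner_smul_right,
    real_inner_self_eq_norm_sq, he]
  ring

lemma integral_comp_stretch_sub [MeasurableSpace E] [BorelSpace E] {F : Type*}
    [NormedAddCommGroup F] [NormedSpace ℝ F] (he : ‖e‖ = 1) {γ : ℝ} (hγ : 0 < γ) (v : E)
    (g : E → F) : ∫ x, g (stretch e γ (x - v)) = γ⁻¹ • ∫ x, g x := by
  have hdet := det_stretch he γ
  have h := integral_comp_linearMap_of_det_ne_zero volume (by rw [hdet]; exact hγ.ne') g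
  rw [hdet, abs_of_pos hγ] at h
  rw [integral_sub_right_eq_self (fun x => g (stretch e γ x)) v]
  exact h

end Stretch

section RadialIntegrals

variable {E : Type*} [NormedAddCommGroup E] [MeasurableSpace E] [BorelSpace E]

/-- The integrand is the divergence of the vector field `x ↦ φ ‖x‖ • x`. -/
lemma integral_radial_divergence_eq_zero [NormedSpace ℝ E] [FiniteDimensional ℝ E] [Nontrivial E]
    (μ : Measure E) [μ.IsAddHaarMeasure] {φ φ' : ℝ → ℝ}
    (hφ : ∀ r ∈ Ici (0 : ℝ), HasDerivAt φ (φ' r) r)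
    (hint : Integrable (fun x => finrank ℝ E * φ ‖x‖ + ‖x‖ * φ' ‖x‖) μ)
    (hlim : Tendsto (fun r => r ^ finrank ℝ E * φ r) atTop (𝓝 0)) :
    ∫ x, (finrank ℝ E * φ ‖x‖ + ‖x‖ * φ' ‖x‖) ∂μ = 0 := by
  set n := finrank ℝ E
  have hn_pos : 0 < n := finrank_pos
  let ψ : ℝ → ℝ := fun r => n * φ r + r * φ' r
  have hderiv : ∀ r ∈ Ici (0 : ℝ),
      HasDerivAt (fun r => r ^ n * φ r) (r ^ (n - 1) • ψ r) r := fun r hr => by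
    refine ((hasDerivAt_pow n r).mul (hφ r hr)).congr_deriv ?_
    rw [smul_eq_mul, ← pow_sub_one_mul hn_pos.ne' r]
    ring
  have hradial : ∫ r in Ioi (0 : ℝ), r ^ (n - 1) • ψ r = 0 := by
    rw [integral_Ioi_of_hasDerivAt_of_tendsto' hderiv
      ((integrable_fun_norm_addHaar μ (f := ψ)).1 hint) hlim, zero_pow hn_pos.ne']
    ring
  rw [integral_fun_norm_addHaar μ ψ, hradial, smul_zero, smul_zero]

variable {c p : ℝ}

lemma integrable_rpow_neg_one_add_norm_sq_div [NormedSpace ℝ E] [FiniteDimensional ℝ E]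
    (μ : Measure E) [μ.IsAddHaarMeasure] (hc : 0 < c) (hp : finrank ℝ E < 2 * p) :
    Integrable (fun x : E => (1 + ‖x‖ ^ 2 / c) ^ (-p)) μ := by
  have h := (integrable_comp_smul_iff μ (fun x : E => (1 + ‖x‖ ^ 2) ^ (-(2 * p) / 2))
    (inv_ne_zero (Real.sqrt_pos.2 hc).ne')).2 (integrable_rpow_neg_one_add_norm_sq hp)
  refine h.congr (.of_forall fun x => ?_)
  simp only [norm_smul, mul_pow, norm_inv, Real.norm_eq_abs, inv_pow, sq_abs, Real.sq_sqrt hc.le]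
  congr 1 <;> ring

lemma tendsto_pow_mul_rpow_neg_one_add_sq_div_atTop {n : ℕ} (hc : 0 < c) (hp : n < 2 * p) :
    Tendsto (fun r : ℝ => r ^ n * (1 + r ^ 2 / c) ^ (-p)) atTop (𝓝 0) := by
  have hp_pos : 0 < p := by linarith [n.cast_nonneg (α := ℝ)]
  have hbound : ∀ᶠ r : ℝ in atTop,
      r ^ n * (1 + r ^ 2 / c) ^ (-p) ≤ c ^ p * r ^ (-(2 * p - n)) := by
    filter_upwards [eventually_gt_atTop 0] with r hr
    calc r ^ n * (1 + r ^ 2 / c) ^ (-p)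
        ≤ r ^ n * (r ^ 2 / c) ^ (-p) := by
          gcongr ?_ * ?_
          exact Real.rpow_le_rpow_of_nonpos (by positivity) (by linarith) (by linarith)
      _ = c ^ p * r ^ (-(2 * p - n)) := by
          rw [Real.div_rpow (by positivity) hc.le, Real.rpow_neg hc.le, div_inv_eq_mul,
            ← Real.rpow_natCast r 2, ← Real.rpow_mul hr.le, ← Real.rpow_natCast r n,
            neg_sub, sub_eq_add_neg, Real.rpow_add hr]
          push_cast
          ring_nf
  refine squeeze_zero' ?_ hbound ?_
  · filter_upwards [eventually_ge_atTop 0] with r hr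
    positivity
  · simpa using (tendsto_rpow_neg_atTop (sub_pos.2 hp)).const_mul (c ^ p)

variable [NormedSpace ℝ E] [FiniteDimensional ℝ E] [Nontrivial E]

lemma integral_rpow_neg_add_one_one_add_norm_sq_div (μ : Measure E) [μ.IsAddHaarMeasure]
    (hc : 0 < c) (hp : finrank ℝ E < 2 * p) :
    2 * p * ∫ x, (1 + ‖x‖ ^ 2 / c) ^ (-(p + 1)) ∂μ
      = (2 * p - finrank ℝ E) * ∫ x, (1 + ‖x‖ ^ 2 / c) ^ (-p) ∂μ := by
  set n := finrank ℝ E with hn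
  let φ' : ℝ → ℝ := fun r => 2 * r / c * -p * (1 + r ^ 2 / c) ^ (-p - 1)
  have hpos (r : ℝ) : 0 < 1 + r ^ 2 / c := by positivity
  have hφ (r : ℝ) : HasDerivAt (fun r => (1 + r ^ 2 / c) ^ (-p)) (φ' r) r := by
    have h : HasDerivAt (fun r : ℝ => 1 + r ^ 2 / c) (2 * r / c) r := by
      simpa using ((hasDerivAt_pow 2 r).div_const c).const_add 1
    exact h.rpow_const (.inl (hpos r).ne')
  have hdiv (r : ℝ) : n * (1 + r ^ 2 / c) ^ (-p) + r * φ' r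
      = 2 * p * (1 + r ^ 2 / c) ^ (-(p + 1)) - (2 * p - n) * (1 + r ^ 2 / c) ^ (-p) := by
    have hsucc : (1 + r ^ 2 / c) ^ (-p) = (1 + r ^ 2 / c) ^ (-(p + 1)) * (1 + r ^ 2 / c) := by
      rw [← Real.rpow_add_one (hpos r).ne']
      ring_nf
    simp only [φ', hsucc, ← neg_add']
    ring
  have hint := (integrable_rpow_neg_one_add_norm_sq_div μ hc hp).const_mul (2 * p - n)
  have hint_succ := (integrable_rpow_neg_one_add_norm_sq_div (p := p + 1) μ hc
    (by linarith)).const_mul (2 * p)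
  have hzero := integral_radial_divergence_eq_zero μ (fun r _ => hφ r)
    ((hint_succ.sub hint).congr (.of_forall fun x => (hdiv ‖x‖).symm))
    (tendsto_pow_mul_rpow_neg_one_add_sq_div_atTop hc hp)
  rw [← integral_const_mul, ← integral_const_mul, ← sub_eq_zero, ← integral_sub hint_succ hint]
  simpa only [← hn, hdiv] using hzero

end RadialIntegrals

section RadialGradient

variable {E F : Type*} [NormedAddCommGroup E] [InnerProductSpace ℝ E]
  [NormedAddCommGroup F] [InnerProductSpace ℝ F]

/-- A radial function, encoded as invariance under every linear isometry of the space. -/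
def IsRadial (f : E → ℝ) : Prop :=
  ∀ Φ : E ≃ₗᵢ[ℝ] E, f ∘ Φ = f

lemma gradient_comp_linearIsometryEquiv [CompleteSpace E] [CompleteSpace F] (f : F → ℝ)
    (Φ : E ≃ₗᵢ[ℝ] F) (x : E) :
    ∇ (f ∘ Φ) x = Φ.symm (∇ f (Φ x)) := by
  refine ext_inner_right ℝ fun y => ?_
  rw [inner_gradient_left, Φ.symm.inner_map_eq_flip, inner_gradient_left, Φ.symm_symm]
  exact congrArg (· y) (Φ.toContinuousLinearEquiv.comp_right_fderiv (f := f) (x := x))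

lemma integrable_inner_gradient_sq [CompleteSpace E] [MeasurableSpace E] [BorelSpace E]
    {μ : Measure E} {f : E → ℝ} (hint : Integrable (fun x => ‖∇ f x‖ ^ 2) μ) (v : E) :
    Integrable (fun x => ⟪v, ∇ f x⟫ ^ 2) μ := by
  have hmeas : Measurable fun x => ⟪v, ∇ f x⟫ ^ 2 := by
    simp only [inner_gradient_right, conj_trivial]
    fun_prop
  refine (hint.const_mul (‖v‖ ^ 2)).mono' hmeas.aestronglyMeasurable (.of_forall fun x => ?_)
  rw [Real.norm_eq_abs, abs_sq, ← mul_pow]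
  exact sq_le_sq' (neg_le_of_abs_le (abs_real_inner_le_norm v _)) (real_inner_le_norm v _)

variable [FiniteDimensional ℝ E] [MeasurableSpace E] [BorelSpace E] {f : E → ℝ}

lemma IsRadial.integral_inner_gradient_sq_eq (hf : IsRadial f) {v w : E} (hvw : ‖v‖ = ‖w‖) :
    ∫ x, ⟪v, ∇ f x⟫ ^ 2 = ∫ x, ⟪w, ∇ f x⟫ ^ 2 := by
  let Φ : E ≃ₗᵢ[ℝ] E := (ℝ ∙ (v - w))ᗮ.reflection
  have hΦ : Φ v = w := Submodule.reflection_sub hvw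
  have hinner (x : E) : ⟪v, ∇ f x⟫ = ⟪w, ∇ f (Φ x)⟫ := by
    rw [← hΦ, ← Φ.inner_map_map v, ← Φ.apply_symm_apply (∇ f (Φ x)),
      ← gradient_comp_linearIsometryEquiv, hf Φ]
  simp only [hinner]
  exact Φ.measurePreserving.integral_comp' (f := Φ.toMeasurableEquiv) fun x => ⟪w, ∇ f x⟫ ^ 2

lemma IsRadial.finrank_mul_integral_inner_gradient_sq (hf : IsRadial f)
    (hint : Integrable (fun x => ‖∇ f x‖ ^ 2)) {e : E} (he : ‖e‖ = 1) :
    finrank ℝ E * ∫ x, ⟪e, ∇ f x⟫ ^ 2 = ∫ x, ‖∇ f x‖ ^ 2 := by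
  let b := stdOrthonormalBasis ℝ E
  calc (finrank ℝ E : ℝ) * ∫ x, ⟪e, ∇ f x⟫ ^ 2
      = ∑ i, ∫ x, ⟪b i, ∇ f x⟫ ^ 2 := by
        simp only [hf.integral_inner_gradient_sq_eq ((b.norm_eq_one _).trans he.symm),
          Finset.sum_const, Finset.card_univ, Fintype.card_fin, nsmul_eq_mul]
    _ = ∫ x, ∑ i, ⟪b i, ∇ f x⟫ ^ 2 :=
        (integral_finsetSum _ fun i _ => integrable_inner_gradient_sq hint (b i)).symm
    _ = ∫ x, ‖∇ f x‖ ^ 2 := by simp only [b.sum_sq_inner_right]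

end RadialGradient

section LorentzBoost

/-- The Lorentz factor `γ = 1 / √(1 - ℓ²)` of a velocity `ℓ ∈ (-1, 1)`; it is the ratio by which a
boost stretches space, and its value is `0` for the other `ℓ`. -/
def lorentzFactor (ℓ : ℝ) : ℝ := (√(1 - ℓ ^ 2))⁻¹

lemma one_sub_sq_pos {ℓ : ℝ} (hℓ : ℓ ∈ Ioo (-1 : ℝ) 1) : 0 < 1 - ℓ ^ 2 :=
  sub_pos.2 ((sq_lt_one_iff_abs_lt_one ℓ).2 (abs_lt.2 hℓ))

lemma lorentzFactor_pos {ℓ : ℝ} (hℓ : ℓ ∈ Ioo (-1 : ℝ) 1) : 0 < lorentzFactor ℓ :=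
  inv_pos.2 (Real.sqrt_pos.2 (one_sub_sq_pos hℓ))

lemma lorentzFactor_sq {ℓ : ℝ} (hℓ : ℓ ∈ Ioo (-1 : ℝ) 1) :
    lorentzFactor ℓ ^ 2 = (1 - ℓ ^ 2)⁻¹ := by
  rw [lorentzFactor, inv_pow, Real.sq_sqrt (one_sub_sq_pos hℓ).le]

variable {E : Type*} [NormedAddCommGroup E] [InnerProductSpace ℝ E]

/-- The Lorentz boost, with velocity `ℓ` in the direction of the unit vector `e`, of the
time-independent wave `f`, evaluated at time `t`. -/
def lorentzBoost (e : E) (ℓ : ℝ) (f : E → ℝ) (t : ℝ) (x : E) : ℝ :=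
  f (stretch e (lorentzFactor ℓ) (x - (t * ℓ) • e))

variable {e : E} {ℓ : ℝ} {f : E → ℝ}

lemma gradient_lorentzBoost [CompleteSpace E] (hf : Differentiable ℝ f) (t : ℝ) (x : E) :
    ∇ (lorentzBoost e ℓ f t) x =
      stretch e (lorentzFactor ℓ) (∇ f (stretch e (lorentzFactor ℓ) (x - (t * ℓ) • e))) := by
  have hL : HasFDerivAt (fun y => stretch e (lorentzFactor ℓ) (y - (t * ℓ) • e))
      (stretch e (lorentzFactor ℓ)) x :=
    (stretch e (lorentzFactor ℓ)).hasFDerivAt.comp x ((hasFDerivAt_id x).sub_const _)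
  refine ext_inner_right ℝ fun y => ?_
  rw [inner_gradient_left, inner_stretch_left, inner_gradient_left]
  exact congrArg (· y) ((hf _).hasFDerivAt.comp x hL).fderiv

lemma deriv_lorentzBoost [CompleteSpace E] (he : ‖e‖ = 1) (hf : Differentiable ℝ f) (t : ℝ)
    (x : E) :
    deriv (fun s => lorentzBoost e ℓ f s x) t = -(ℓ * lorentzFactor ℓ) *
      ⟪e, ∇ f (stretch e (lorentzFactor ℓ) (x - (t * ℓ) • e))⟫ := by
  have hline : HasDerivAt (fun s : ℝ => stretch e (lorentzFactor ℓ) (x - (s * ℓ) • e))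
      (-(ℓ * lorentzFactor ℓ) • e) t := by
    refine ((stretch e (lorentzFactor ℓ)).hasFDerivAt.comp_hasDerivAt t
      ((((hasDerivAt_id t).mul_const ℓ).smul_const e).const_sub x)).congr_deriv ?_
    rw [map_neg, map_smul, stretch_self he]
    module
  have h := ((hf _).hasFDerivAt.comp_hasDerivAt t hline).deriv
  rw [map_smul, smul_eq_mul, ← inner_gradient_left, real_inner_comm] at h
  exact h

theorem energy_lorentzBoost {N : ℕ} {e : EuclideanSpace ℝ (Fin N)} (he : ‖e‖ = 1)
    (hℓ : ℓ ∈ Ioo (-1 : ℝ) 1) {f : EuclideanSpace ℝ (Fin N) → ℝ} (hf : Differentiable ℝ f)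
    (hint : Integrable (fun x => ‖∇ f x‖ ^ 2)) (t : ℝ) :
    energy N (lorentzBoost e ℓ f t) (fun x => deriv (fun s => lorentzBoost e ℓ f s x) t) =
      (lorentzFactor ℓ)⁻¹ *
        (energy N f 0 + (lorentzFactor ℓ ^ 2 - 1) * ∫ x, ⟪e, ∇ f x⟫ ^ 2) := by
  set γ := lorentzFactor ℓ with hγ
  have hγ_sq : ℓ ^ 2 * γ ^ 2 = γ ^ 2 - 1 := by
    have := (one_sub_sq_pos hℓ).ne'
    rw [hγ, lorentzFactor_sq hℓ]
    field
  have hcov (g : EuclideanSpace ℝ (Fin N) → ℝ) :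
      ∫ x, g (stretch e γ (x - (t * ℓ) • e)) = γ⁻¹ * ∫ x, g x :=
    integral_comp_stretch_sub he (lorentzFactor_pos hℓ) _ g
  have htime : ∫ x, deriv (fun s => lorentzBoost e ℓ f s x) t ^ 2
      = γ⁻¹ * ((γ ^ 2 - 1) * ∫ x, ⟪e, ∇ f x⟫ ^ 2) := by
    simp only [deriv_lorentzBoost he hf, mul_pow, neg_sq, ← hγ, hγ_sq, integral_const_mul]
    rw [hcov fun x => ⟪e, ∇ f x⟫ ^ 2]
    ring
  have hspace : ∫ x, ‖∇ (lorentzBoost e ℓ f t) x‖ ^ 2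
      = γ⁻¹ * ((∫ x, ‖∇ f x‖ ^ 2) + (γ ^ 2 - 1) * ∫ x, ⟪e, ∇ f x⟫ ^ 2) := by
    simp only [gradient_lorentzBoost hf, norm_stretch_sq he, ← hγ]
    rw [hcov fun x => ‖∇ f x‖ ^ 2 + (γ ^ 2 - 1) * ⟪e, ∇ f x⟫ ^ 2, integral_add hint
      ((integrable_inner_gradient_sq hint e).const_mul _), integral_const_mul]
  have hpotential (q : ℝ) :
      ∫ x, |lorentzBoost e ℓ f t x| ^ q = γ⁻¹ * ∫ x, |f x| ^ q :=
    hcov fun x => |f x| ^ q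
  simp only [energy, htime, hspace, hpotential, Pi.zero_apply, ne_eq, OfNat.ofNat_ne_zero,
    not_false_eq_true, zero_pow, integral_zero]
  ring

end LorentzBoost

section GroundState

variable {N : ℕ}

lemma isRadial_W : IsRadial (W N) := fun Φ => by
  ext x
  simp only [Function.comp_apply, W, Φ.norm_map]

lemma natCast_mul_sub_two_pos (hN : 3 ≤ N) : 0 < (N : ℝ) * ((N : ℝ) - 2) := by
  have : (3 : ℝ) ≤ N := by exact_mod_cast hN
  nlinarith

/-- The base `u` of the power `W = u ^ (-(N - 2) / 2)`. All the integrands occurring in the energy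
of `W` are combinations of powers of `u`. -/
def groundStateBase (N : ℕ) (x : EuclideanSpace ℝ (Fin N)) : ℝ :=
  1 + ‖x‖ ^ 2 / ((N : ℝ) * ((N : ℝ) - 2))

lemma groundStateBase_pos (hN : 3 ≤ N) (x : EuclideanSpace ℝ (Fin N)) :
    0 < groundStateBase N x := by
  have := natCast_mul_sub_two_pos hN
  unfold groundStateBase
  positivity

lemma integrable_groundStateBase_rpow_neg (hN : 3 ≤ N) {p : ℝ} (hp : N < 2 * p) :
    Integrable (fun x => groundStateBase N x ^ (-p)) :=
  integrable_rpow_neg_one_add_norm_sq_div volume (natCast_mul_sub_two_pos hN)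
    (by rwa [finrank_euclideanSpace_fin])

lemma integral_groundStateBase_rpow_neg_add_one (hN : 3 ≤ N) {p : ℝ} (hp : N < 2 * p) :
    2 * p * ∫ x, groundStateBase N x ^ (-(p + 1))
      = (2 * p - N) * ∫ x, groundStateBase N x ^ (-p) := by
  have : NeZero N := ⟨by lia⟩
  have h := integral_rpow_neg_add_one_one_add_norm_sq_div
    (volume : Measure (EuclideanSpace ℝ (Fin N))) (natCast_mul_sub_two_pos hN)
    (by rwa [finrank_euclideanSpace_fin])
  rwa [finrank_euclideanSpace_fin] at h

lemma hasFDerivAt_groundStateBase (x : EuclideanSpace ℝ (Fin N)) :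
    HasFDerivAt (groundStateBase N) ((2 / ((N : ℝ) * ((N : ℝ) - 2))) • innerSL ℝ x) x := by
  refine (((hasStrictFDerivAt_norm_sq x).hasFDerivAt.mul_const
    ((N : ℝ) * ((N : ℝ) - 2))⁻¹).const_add 1).congr_fderiv ?_
  module

lemma hasGradientAt_W (hN : 3 ≤ N) (x : EuclideanSpace ℝ (Fin N)) :
    HasGradientAt (W N) ((-(N : ℝ)⁻¹ * groundStateBase N x ^ (-(N / 2 : ℝ))) • x) x := by
  rw [hasGradientAt_iff_hasFDerivAt]
  refine ((hasFDerivAt_groundStateBase x).rpow_const (p := -(((N : ℝ) - 2) / 2))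
    (.inl (groundStateBase_pos hN x).ne')).congr_fderiv ?_
  have hN₂ : (N : ℝ) - 2 ≠ 0 := right_ne_zero_of_mul (natCast_mul_sub_two_pos hN).ne'
  have hexp : -(((N : ℝ) - 2) / 2) - 1 = -(N / 2) := by ring
  ext y
  simp only [hexp, smul_smul, smul_apply, innerSL_apply_apply, smul_eq_mul,
    map_smul, InnerProductSpace.toDual_apply_apply]
  field

lemma differentiable_W (hN : 3 ≤ N) : Differentiable ℝ (W N) :=
  fun x => (hasGradientAt_W hN x).differentiableAt

lemma norm_sq_eq_groundStateBase (hN : 3 ≤ N) (x : EuclideanSpace ℝ (Fin N)) :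
    ‖x‖ ^ 2 = (N : ℝ) * ((N : ℝ) - 2) * (groundStateBase N x - 1) := by
  rw [groundStateBase, add_sub_cancel_left, mul_div_cancel₀ _ (natCast_mul_sub_two_pos hN).ne']

lemma norm_gradient_W_sq (hN : 3 ≤ N) (x : EuclideanSpace ℝ (Fin N)) :
    ‖∇ (W N) x‖ ^ 2 = ((N : ℝ) - 2) / N *
      (groundStateBase N x ^ (-((N : ℝ) - 1)) - groundStateBase N x ^ (-(N : ℝ))) := by
  have hu := groundStateBase_pos hN x
  have hsq : (groundStateBase N x ^ (-(N / 2 : ℝ))) ^ 2 = groundStateBase N x ^ (-(N : ℝ)) := by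
    rw [← Real.rpow_mul_natCast hu.le]
    ring_nf
  have hsucc : groundStateBase N x ^ (-((N : ℝ) - 1))
      = groundStateBase N x ^ (-(N : ℝ)) * groundStateBase N x := by
    rw [← Real.rpow_add_one hu.ne']
    ring_nf
  have hN₀ : (N : ℝ) ≠ 0 := left_ne_zero_of_mul (natCast_mul_sub_two_pos hN).ne'
  rw [(hasGradientAt_W hN x).gradient, norm_smul, mul_pow, Real.norm_eq_abs, sq_abs, mul_pow,
    norm_sq_eq_groundStateBase hN, hsq, hsucc]
  field

lemma abs_W_rpow (hN : 3 ≤ N) (x : EuclideanSpace ℝ (Fin N)) :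
    |W N x| ^ (2 * (N : ℝ) / ((N : ℝ) - 2))
      = groundStateBase N x ^ (-(N : ℝ)) := by
  have hu := groundStateBase_pos hN x
  have hN₂ : (N : ℝ) - 2 ≠ 0 := right_ne_zero_of_mul (natCast_mul_sub_two_pos hN).ne'
  change |groundStateBase N x ^ _| ^ _ = _
  rw [abs_of_pos (by positivity), ← Real.rpow_mul hu.le]
  congr 1
  field

lemma integrable_norm_gradient_W_sq (hN : 3 ≤ N) :
    Integrable (fun x => ‖∇ (W N) x‖ ^ 2) := by
  have hN' : (3 : ℝ) ≤ N := by exact_mod_cast hN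
  simp only [norm_gradient_W_sq hN]
  exact ((integrable_groundStateBase_rpow_neg hN (by linarith)).sub
    (integrable_groundStateBase_rpow_neg hN (by linarith))).const_mul _

theorem pohozaev_W (hN : 3 ≤ N) :
    ∫ x, ‖∇ (W N) x‖ ^ 2 = ∫ x, |W N x| ^ (2 * (N : ℝ) / ((N : ℝ) - 2)) := by
  have hN' : (3 : ℝ) ≤ N := by exact_mod_cast hN
  have hrec := integral_groundStateBase_rpow_neg_add_one hN (p := N - 1) (by linarith)
  rw [sub_add_cancel] at hrec
  simp only [norm_gradient_W_sq hN, abs_W_rpow hN, integral_const_mul]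
  rw [integral_sub (integrable_groundStateBase_rpow_neg hN (by linarith))
    (integrable_groundStateBase_rpow_neg hN (by linarith)), div_mul_eq_mul_div,
    div_eq_iff (by positivity)]
  linarith

theorem energy_W (hN : 3 ≤ N) :
    energy N (W N) 0 = (N : ℝ)⁻¹ * ∫ x, ‖∇ (W N) x‖ ^ 2 := by
  have : (N : ℝ) ≠ 0 := left_ne_zero_of_mul (natCast_mul_sub_two_pos hN).ne'
  simp only [energy, ← pohozaev_W hN, Pi.zero_apply, ne_eq, OfNat.ofNat_ne_zero,
    not_false_eq_true, zero_pow, integral_zero]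
  field

lemma Wl_eq_lorentzBoost (hN : 0 < N) {ℓ : ℝ} (hℓ : ℓ ∈ Ioo (-1 : ℝ) 1) :
    Wl N ℓ = lorentzBoost (EuclideanSpace.single ⟨0, hN⟩ 1) ℓ (W N) := by
  ext t x
  set e : EuclideanSpace ℝ (Fin N) := EuclideanSpace.single ⟨0, hN⟩ 1 with he_def
  have he : ‖e‖ = 1 := by simp [he_def]
  have hfirst : firstCoord x = ⟪e, x⟫ := by
    simp [firstCoord, hN, he_def, EuclideanSpace.inner_single_left]
  have hinner : ⟪e, x - (t * ℓ) • e⟫ = ⟪e, x⟫ - t * ℓ := by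
    rw [inner_sub_right, real_inner_smul_right, real_inner_self_eq_norm_sq, he]
    ring
  have hnorm : ‖x - (t * ℓ) • e‖ ^ 2 = ‖x‖ ^ 2 - ⟪e, x⟫ ^ 2 + (⟪e, x⟫ - t * ℓ) ^ 2 := by
    rw [norm_sub_sq_real, real_inner_smul_right, norm_smul, he, real_inner_comm, Real.norm_eq_abs,
      mul_one, sq_abs]
    ring
  rw [Wl, lorentzBoost, W, norm_stretch_sq he, hinner, hnorm, lorentzFactor_sq hℓ, hfirst]
  congr 1
  simp only [div_eq_mul_inv, mul_inv]
  ring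

end GroundState

theorem stmt4_general (N : ℕ) (hN : 3 ≤ N) (ℓ : ℝ) (hℓ : ℓ ∈ Set.Ioo (-1 : ℝ) 1) (t : ℝ) :
    energy N (Wl N ℓ t) (dtWl N ℓ t)
      = (1 / Real.sqrt (1 - ℓ ^ 2)) * energy N (W N) 0 := by
  set e : EuclideanSpace ℝ (Fin N) := EuclideanSpace.single ⟨0, by lia⟩ 1 with he_def
  have he : ‖e‖ = 1 := by simp [he_def]
  have hWl : Wl N ℓ = lorentzBoost e ℓ (W N) := Wl_eq_lorentzBoost (by lia) hℓ
  have hint := integrable_norm_gradient_W_sq hN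
  have hN_ne : (N : ℝ) ≠ 0 := by positivity
  have hdir : ∫ x, ⟪e, ∇ (W N) x⟫ ^ 2 = energy N (W N) 0 := by
    rw [energy_W hN, eq_inv_mul_iff_mul_eq₀ hN_ne,
      ← isRadial_W.finrank_mul_integral_inner_gradient_sq hint he, finrank_euclideanSpace_fin]
  have hγ := lorentzFactor_pos hℓ
  calc energy N (Wl N ℓ t) (dtWl N ℓ t)
      = (lorentzFactor ℓ)⁻¹ *
          (energy N (W N) 0 + (lorentzFactor ℓ ^ 2 - 1) * ∫ x, ⟪e, ∇ (W N) x⟫ ^ 2) := by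
        unfold dtWl
        rw [hWl, energy_lorentzBoost he hℓ (differentiable_W hN) hint]
    _ = lorentzFactor ℓ * energy N (W N) 0 := by
        rw [hdir]
        field
    _ = (1 / Real.sqrt (1 - ℓ ^ 2)) * energy N (W N) 0 := by rw [lorentzFactor, one_div]

/-- Claim 2.3, third line: the energy of the solitary wave `W_ℓ`. -/
theorem stmt4 (N : ℕ) (hN : N = 3 ∨ N = 4 ∨ N = 5)
    (ℓ : ℝ) (hℓ : ℓ ∈ Set.Ioo (-1 : ℝ) 1) :
    energy N (Wl N ℓ 0) (dtWl N ℓ 0)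
      = (1 / Real.sqrt (1 - ℓ ^ 2)) * energy N (W N) 0 :=
  stmt4_general N (by lia) ℓ hℓ 0

end
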